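/- arXiv:1805.02604 — 2 statements merged into one kernel-verified Lean document; each statement's English description precedes it below -/
import Mathlib

section
/- Let Ω ⊂ ℝ^N be open and bounded, let F : ℝ × ℝ^N → ℝ be of class C³, let u : ℝ^N → ℝ be bounded and of class C³ with bounded derivatives, and let η : ℝ^N → ℝ^N be bounded and of class C³ with bounded derivatives. Set Z := (η·∇)η, let M_t(x) be the N×N matrix with entries δ_{ij} + t ∂η^i/∂x_j + (t²/2) ∂Z^i/∂x_j, and define 𝔄(t) := ∫_Ω F(u(x), q_t(x)) · det M_t(x) dx for |t| small, where q_t(x) has j-th component Σ_i ∂u/∂x_i (M_t(x)⁻¹)_{ij}. Then 𝔄 is twice differentiable at t = 0 and 𝔄''(0) = ∫_Ω { F·X − 2 (∇_p F, ∇u·∇η) · div η − 2 (∇_p F, Y) + Σ_{i,j} F_{p_i p_j} (∇u·∇η)_i (∇u·∇η)_j } dx, where F and its derivatives are evaluated at (u, ∇u), X := div Z + (div η)² − trace((∇η)²), Y has k-th component (1/2) Σ_i ∂u/∂x_i ∂Z^i/∂x_k − Σ_{i,j} ∂u/∂x_i ∂η^i/∂x_j ∂η^j/∂x_k, and (∇u·∇η)_j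 := Σ_i ∂u/∂x_i ∂η^i/∂x_j. -/
open Filter MeasureTheory Topology
open scoped RealInnerProductSpace

namespace PaperAC

/-- The partial derivative `∂f/∂x_j` of a scalar function on `ℝ^N`. -/
noncomputable def pdv {N : ℕ} (f : (Fin N → ℝ) → ℝ) (j : Fin N) (x : Fin N → ℝ) : ℝ :=
  fderiv ℝ f x (Pi.single j 1)

/-- The advection field `(η·∇)η`, with components `((η·∇)η)^i = ∑_j η^j ∂η^i/∂x_j`. -/
noncomputable def advf {N : ℕ} (η : (Fin N → ℝ) → (Fin N → ℝ)) (x : Fin N → ℝ) :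
    Fin N → ℝ :=
  fun i => ∑ j, η x j * pdv (fun z => η z i) j x

/-- The gradient `∇u` of a scalar function on `ℝ^N`. -/
noncomputable def grad {N : ℕ} (u : (Fin N → ℝ) → ℝ) (x : Fin N → ℝ) : Fin N → ℝ :=
  fun i => pdv u i x

/-- `X₀ := (D²u·η, η) + (∇u, 2(η·∇)η − ζ)`. -/
noncomputable def X0 {N : ℕ} (u : (Fin N → ℝ) → ℝ) (η ζ : (Fin N → ℝ) → (Fin N → ℝ))
    (y : Fin N → ℝ) : ℝ :=
  (∑ i, ∑ j, pdv (pdv u i) j y * η y i * η y j)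
    + ∑ i, pdv u i y * (2 * advf η y i - ζ y i)

/-- `−∇u·η`. -/
noncomputable def nGradDot {N : ℕ} (u : (Fin N → ℝ) → ℝ) (η : (Fin N → ℝ) → (Fin N → ℝ))
    (x : Fin N → ℝ) : ℝ :=
  -(∑ i, pdv u i x * η x i)

/-- `F_z`, the partial derivative of `F = F(z,p)` in the scalar variable. -/
noncomputable def Fz {N : ℕ} (F : ℝ × (Fin N → ℝ) → ℝ) (z : ℝ) (p : Fin N → ℝ) : ℝ :=
  fderiv ℝ F (z, p) (1, 0)

/-- `F_{p_i}`. -/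
noncomputable def Fp {N : ℕ} (F : ℝ × (Fin N → ℝ) → ℝ) (i : Fin N) (z : ℝ) (p : Fin N → ℝ) :
    ℝ :=
  fderiv ℝ F (z, p) (0, Pi.single i 1)

/-- `F_{zz}`. -/
noncomputable def Fzz {N : ℕ} (F : ℝ × (Fin N → ℝ) → ℝ) (z : ℝ) (p : Fin N → ℝ) : ℝ :=
  fderiv ℝ (fun q => fderiv ℝ F q (1, 0)) (z, p) (1, 0)

/-- `F_{z p_i}`. -/
noncomputable def Fzp {N : ℕ} (F : ℝ × (Fin N → ℝ) → ℝ) (i : Fin N) (z : ℝ) (p : Fin N → ℝ) :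
    ℝ :=
  fderiv ℝ (fun q => fderiv ℝ F q ((0 : ℝ), Pi.single i 1)) (z, p) (1, 0)

/-- `F_{p_i p_j}`. -/
noncomputable def Fpp {N : ℕ} (F : ℝ × (Fin N → ℝ) → ℝ) (i j : Fin N) (z : ℝ)
    (p : Fin N → ℝ) : ℝ :=
  fderiv ℝ (fun q => fderiv ℝ F q ((0 : ℝ), Pi.single j 1)) (z, p) ((0 : ℝ), Pi.single i 1)

/-- `𝔄₁(t) = A(u ∘ Φ_t⁻¹) = ∫_Ω F(u_t, ∇u_t)`, the inner deformation of the functional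
`A(w) := ∫_Ω F(w, ∇w)`. -/
noncomputable def innerA {N : ℕ} (Ω : Set (Fin N → ℝ)) (F : ℝ × (Fin N → ℝ) → ℝ)
    (u : (Fin N → ℝ) → ℝ) (Φ : ℝ → (Fin N → ℝ) → (Fin N → ℝ)) (t : ℝ) : ℝ :=
  ∫ y in Ω, F (u (Function.invFun (Φ t) y),
      grad (fun z => u (Function.invFun (Φ t) z)) y)

/-- `t ↦ A(u + tφ) = ∫_Ω F(u + tφ, ∇u + t∇φ)`, the outer deformation of the functional
`A(w) := ∫_Ω F(w, ∇w)`. -/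
noncomputable def gateauxA {N : ℕ} (Ω : Set (Fin N → ℝ)) (F : ℝ × (Fin N → ℝ) → ℝ)
    (u φ : (Fin N → ℝ) → ℝ) (t : ℝ) : ℝ :=
  ∫ x in Ω, F (u x + t * φ x, fun i => pdv u i x + t * pdv φ i x)

/-- The matrix `M_t(x)` with entries `δ_{ij} + t ∂η^i/∂x_j + (t²/2) ∂W^i/∂x_j`. -/
noncomputable def defMat {N : ℕ} (η W : (Fin N → ℝ) → (Fin N → ℝ)) (t : ℝ)
    (x : Fin N → ℝ) : Matrix (Fin N) (Fin N) ℝ :=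
  Matrix.of fun i j =>
    (if i = j then (1 : ℝ) else 0) + t * pdv (fun z => η z i) j x
      + (t ^ 2 / 2) * pdv (fun z => W z i) j x

/-- `Φ(a) := ∫_0^a |s² − 1| ds`. -/
noncomputable def PhiAC (a : ℝ) : ℝ := ∫ s in (0 : ℝ)..a, |s ^ 2 - 1|

/-- All partial derivatives (= iterated Fréchet derivatives) of `f` up to order `n` are
bounded; the case `i = 0` says `f` itself is bounded. -/
def BddUpTo {N : ℕ} {E : Type*} [NormedAddCommGroup E] [NormedSpace ℝ E]
    (n : ℕ) (f : (Fin N → ℝ) → E) : Prop :=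
  ∀ i : ℕ, i ≤ n → ∃ C : ℝ, ∀ x, ‖iteratedFDeriv ℝ i f x‖ ≤ C


section Helpers

open scoped Matrix.Norms.Operator

lemma hasDerivAt_matInv {N : ℕ} {M : ℝ → Matrix (Fin N) (Fin N) ℝ}
    {M' : Matrix (Fin N) (Fin N) ℝ} {t : ℝ} (hM : HasDerivAt M M' t) (hd : (M t).det ≠ 0) :
    HasDerivAt (fun s => (M s)⁻¹) (-((M t)⁻¹ * M' * (M t)⁻¹)) t := by
  have hu : IsUnit (M t) := (Matrix.isUnit_iff_isUnit_det _).2 (isUnit_iff_ne_zero.2 hd)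
  obtain ⟨v, hv⟩ := hu
  have h1 := hasFDerivAt_ringInverse (𝕜 := ℝ) v
  rw [hv] at h1
  have h2 := h1.comp_hasDerivAt t hM
  have e : (↑v⁻¹ : Matrix (Fin N) (Fin N) ℝ) = (M t)⁻¹ := by
    rw [← hv, Matrix.coe_units_inv]
  simp only [Matrix.nonsing_inv_eq_ringInverse] at *
  refine h2.congr_deriv ?_
  simp [e]

lemma differentiable_matDet {N : ℕ} :
    Differentiable ℝ (fun A : Matrix (Fin N) (Fin N) ℝ => A.det) := by
  have he : ∀ i j, Differentiable ℝ (fun A : Matrix (Fin N) (Fin N) ℝ => A i j) := fun i j =>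
    (LinearMap.toContinuousLinearMap
      (Matrix.entryLinearMap ℝ ℝ i j : Matrix (Fin N) (Fin N) ℝ →ₗ[ℝ] ℝ)).differentiable
  simp only [Matrix.det_apply]
  fun_prop

lemma hasDerivAt_matDet_one {N : ℕ} (H : Matrix (Fin N) (Fin N) ℝ) :
    fderiv ℝ (fun A : Matrix (Fin N) (Fin N) ℝ => A.det) 1 H = H.trace := by
  have h1 : HasDerivAt (fun r : ℝ => (1 : Matrix (Fin N) (Fin N) ℝ) + r • H) H 0 := by
    exact (((hasDerivAt_id (0:ℝ)).smul_const H).const_add 1).congr_deriv (by simp)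
  have hd : HasFDerivAt (fun A : Matrix (Fin N) (Fin N) ℝ => A.det)
      (fderiv ℝ (fun A : Matrix (Fin N) (Fin N) ℝ => A.det) 1) (1 + (0:ℝ) • H) := by
    simpa using (differentiable_matDet (N := N) 1).hasFDerivAt
  have h2 := hd.comp_hasDerivAt 0 h1
  have h3 : HasDerivAt (fun r : ℝ => ((1 : Matrix (Fin N) (Fin N) ℝ) + r • H).det) H.trace 0 := by
    rw [show (fun r : ℝ => ((1 : Matrix (Fin N) (Fin N) ℝ) + r • H).det) = _ from
      funext fun r => Matrix.det_one_add_smul r H]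
    set P := (Matrix.det (1 + (Polynomial.X : Polynomial ℝ) • H.map Polynomial.C)).divX.divX
    have := (((hasDerivAt_id (0:ℝ)).const_mul H.trace).const_add 1).add
      ((P.hasDerivAt 0).mul ((hasDerivAt_id (0:ℝ)).pow 2))
    refine this.congr_deriv ?_
    simp
  exact h2.unique h3

lemma hasDerivAt_matDet {N : ℕ} {M : ℝ → Matrix (Fin N) (Fin N) ℝ}
    {M' : Matrix (Fin N) (Fin N) ℝ} {t : ℝ} (hM : HasDerivAt M M' t) (hd : (M t).det ≠ 0) :
    HasDerivAt (fun s => (M s).det) ((M t).det * ((M t)⁻¹ * M').trace) t := by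
  have hu : IsUnit (M t).det := isUnit_iff_ne_zero.2 hd
  have e : ∀ s, (M s).det = (M t).det * ((M t)⁻¹ * M s).det := fun s => by
    rw [← Matrix.det_mul, ← Matrix.mul_assoc, Matrix.mul_nonsing_inv _ hu, Matrix.one_mul]
  have h1 : HasDerivAt (fun s => (M t)⁻¹ * M s) ((M t)⁻¹ * M') t := hM.const_mul _
  have hd : HasFDerivAt (fun A : Matrix (Fin N) (Fin N) ℝ => A.det)
      (fderiv ℝ (fun A : Matrix (Fin N) (Fin N) ℝ => A.det) 1) ((M t)⁻¹ * M t) := by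
    rw [Matrix.nonsing_inv_mul _ hu]
    exact (differentiable_matDet (N := N) 1).hasFDerivAt
  have h2 := (hd.comp_hasDerivAt t h1).congr_deriv (hasDerivAt_matDet_one _)
  have h3 := h2.const_mul (M t).det
  refine h3.congr_of_eventuallyEq (Eventually.of_forall fun s => ?_)
  exact e s

lemma hasDerivAt_vecMul {N : ℕ} (p : Fin N → ℝ) {S : ℝ → Matrix (Fin N) (Fin N) ℝ}
    {S' : Matrix (Fin N) (Fin N) ℝ} {t : ℝ} (hS : HasDerivAt S S' t) :
    HasDerivAt (fun s => Matrix.vecMul p (S s)) (Matrix.vecMul p S') t :=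
  (LinearMap.toContinuousLinearMap
    ((Matrix.vecMulBilin ℝ ℝ : (Fin N → ℝ) →ₗ[ℝ] Matrix (Fin N) (Fin N) ℝ →ₗ[ℝ] (Fin N → ℝ))
      p)).hasFDerivAt.comp_hasDerivAt t hS

lemma hasDerivAt_matTrace {N : ℕ} {S : ℝ → Matrix (Fin N) (Fin N) ℝ}
    {S' : Matrix (Fin N) (Fin N) ℝ} {t : ℝ} (hS : HasDerivAt S S' t) :
    HasDerivAt (fun s => (S s).trace) S'.trace t :=
  (LinearMap.toContinuousLinearMap
    (Matrix.traceLinearMap (Fin N) ℝ ℝ)).hasFDerivAt.comp_hasDerivAt t hS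

noncomputable def MM {N : ℕ} (B C : Matrix (Fin N) (Fin N) ℝ) (t : ℝ) :
    Matrix (Fin N) (Fin N) ℝ := 1 + t • B + (t ^ 2 / 2) • C

lemma hasDerivAt_MM {N : ℕ} (B C : Matrix (Fin N) (Fin N) ℝ) (t : ℝ) :
    HasDerivAt (MM B C) (B + t • C) t := by
  have := (((hasDerivAt_id t).smul_const B).const_add 1).add
    ((((hasDerivAt_id t).pow 2).div_const 2).smul_const C)
  refine this.congr_deriv ?_
  simp

noncomputable def qq {N : ℕ} (p : Fin N → ℝ) (B C : Matrix (Fin N) (Fin N) ℝ) (t : ℝ) :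
    Fin N → ℝ := Matrix.vecMul p (MM B C t)⁻¹

noncomputable def qq1 {N : ℕ} (p : Fin N → ℝ) (B C : Matrix (Fin N) (Fin N) ℝ) (t : ℝ) :
    Fin N → ℝ := Matrix.vecMul p (-((MM B C t)⁻¹ * (B + t • C) * (MM B C t)⁻¹))

noncomputable def qq2 {N : ℕ} (p : Fin N → ℝ) (B C : Matrix (Fin N) (Fin N) ℝ) (t : ℝ) :
    Fin N → ℝ := Matrix.vecMul p
      (-((-((MM B C t)⁻¹ * (B + t • C) * (MM B C t)⁻¹) * (B + t • C)
          + (MM B C t)⁻¹ * C) * (MM B C t)⁻¹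
        + (MM B C t)⁻¹ * (B + t • C) * -((MM B C t)⁻¹ * (B + t • C) * (MM B C t)⁻¹)))

noncomputable def dd1 {N : ℕ} (B C : Matrix (Fin N) (Fin N) ℝ) (t : ℝ) : ℝ :=
  (MM B C t).det * ((MM B C t)⁻¹ * (B + t • C)).trace

noncomputable def dd2 {N : ℕ} (B C : Matrix (Fin N) (Fin N) ℝ) (t : ℝ) : ℝ :=
  (dd1 B C t) * ((MM B C t)⁻¹ * (B + t • C)).trace +
  (MM B C t).det * (-((MM B C t)⁻¹ * (B + t • C) * (MM B C t)⁻¹) * (B + t • C)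
          + (MM B C t)⁻¹ * C).trace

section
variable {N : ℕ} (p : Fin N → ℝ) (B C : Matrix (Fin N) (Fin N) ℝ) (t : ℝ)
  (hd : (MM B C t).det ≠ 0)
include hd

lemma hasDerivAt_qq : HasDerivAt (qq p B C) (qq1 p B C t) t :=
  hasDerivAt_vecMul p (hasDerivAt_matInv (hasDerivAt_MM B C t) hd)

lemma hasDerivAt_W : HasDerivAt (fun t : ℝ => B + t • C) C t := by
  exact (((hasDerivAt_id t).smul_const C).const_add B).congr_deriv (by simp)

lemma hasDerivAt_SW : HasDerivAt (fun t : ℝ => (MM B C t)⁻¹ * (B + t • C))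
    (-((MM B C t)⁻¹ * (B + t • C) * (MM B C t)⁻¹) * (B + t • C) + (MM B C t)⁻¹ * C) t :=
  (hasDerivAt_matInv (hasDerivAt_MM B C t) hd).mul (hasDerivAt_W B C t hd)

lemma hasDerivAt_qq1 : HasDerivAt (qq1 p B C) (qq2 p B C t) t :=
  hasDerivAt_vecMul p (((hasDerivAt_SW B C t hd).mul
    (hasDerivAt_matInv (hasDerivAt_MM B C t) hd)).neg)

lemma hasDerivAt_dd : HasDerivAt (fun t => (MM B C t).det) (dd1 B C t) t :=
  hasDerivAt_matDet (hasDerivAt_MM B C t) hd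

lemma hasDerivAt_dd1 : HasDerivAt (dd1 B C) (dd2 B C t) t :=
  (hasDerivAt_dd B C t hd).mul (hasDerivAt_matTrace (hasDerivAt_SW B C t hd))

end

noncomputable def gg {N : ℕ} (F : ℝ × (Fin N → ℝ) → ℝ) (z : ℝ) (p : Fin N → ℝ)
    (B C : Matrix (Fin N) (Fin N) ℝ) (t : ℝ) : ℝ :=
  F (z, qq p B C t) * (MM B C t).det

noncomputable def gg1 {N : ℕ} (F : ℝ × (Fin N → ℝ) → ℝ) (z : ℝ) (p : Fin N → ℝ)
    (B C : Matrix (Fin N) (Fin N) ℝ) (t : ℝ) : ℝ :=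
  fderiv ℝ F (z, qq p B C t) (0, qq1 p B C t) * (MM B C t).det
    + F (z, qq p B C t) * dd1 B C t

noncomputable def gg2 {N : ℕ} (F : ℝ × (Fin N → ℝ) → ℝ) (z : ℝ) (p : Fin N → ℝ)
    (B C : Matrix (Fin N) (Fin N) ℝ) (t : ℝ) : ℝ :=
  ((fderiv ℝ (fderiv ℝ F) (z, qq p B C t) (0, qq1 p B C t) (0, qq1 p B C t)
      + fderiv ℝ F (z, qq p B C t) (0, qq2 p B C t)) * (MM B C t).det
    + fderiv ℝ F (z, qq p B C t) (0, qq1 p B C t) * dd1 B C t)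
    + (fderiv ℝ F (z, qq p B C t) (0, qq1 p B C t) * dd1 B C t
      + F (z, qq p B C t) * dd2 B C t)

section
variable {N : ℕ} (F : ℝ × (Fin N → ℝ) → ℝ) (hF : ContDiff ℝ 3 F) (z : ℝ) (p : Fin N → ℝ)
  (B C : Matrix (Fin N) (Fin N) ℝ) (t : ℝ)
include hF

lemma hasDerivAt_gg (hd : (MM B C t).det ≠ 0) :
    HasDerivAt (gg F z p B C) (gg1 F z p B C t) t := by
  have h0 : HasDerivAt (fun t => (z, qq p B C t)) ((0:ℝ), qq1 p B C t) t :=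
    (hasDerivAt_const t z).prodMk (hasDerivAt_qq p B C t hd)
  have h1 := ((hF.differentiable (by norm_num)) (z, qq p B C t)).hasFDerivAt.comp_hasDerivAt t h0
  exact h1.mul (hasDerivAt_dd B C t hd)

lemma hasDerivAt_gg1 (hd : (MM B C t).det ≠ 0) :
    HasDerivAt (gg1 F z p B C) (gg2 F z p B C t) t := by
  have h0 : HasDerivAt (fun t => (z, qq p B C t)) ((0:ℝ), qq1 p B C t) t :=
    (hasDerivAt_const t z).prodMk (hasDerivAt_qq p B C t hd)
  have h0' : HasDerivAt (fun t => ((0:ℝ), qq1 p B C t)) ((0:ℝ), qq2 p B C t) t :=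
    (hasDerivAt_const t 0).prodMk (hasDerivAt_qq1 p B C t hd)
  have h1 := ((hF.differentiable (by norm_num)) (z, qq p B C t)).hasFDerivAt.comp_hasDerivAt t h0
  have hF' : ContDiff ℝ 2 (fderiv ℝ F) := hF.fderiv_right (by norm_num)
  have h2 := ((hF'.differentiable (by norm_num)) (z, qq p B C t)).hasFDerivAt.comp_hasDerivAt t h0
  have h3 := h2.clm_apply h0'
  exact (h3.mul (hasDerivAt_dd B C t hd)).add (h1.mul (hasDerivAt_dd1 B C t hd))

omit hF in
lemma MM_zero : MM B C 0 = 1 := by simp [MM]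

lemma gg2_zero : gg2 F z p B C 0 =
    F (z, p) * (C.trace + B.trace ^ 2 - (B * B).trace)
    - 2 * (∑ j, Fp F j z p * Matrix.vecMul p B j) * B.trace
    - 2 * (∑ k, Fp F k z p * ((1/2) * Matrix.vecMul p C k - Matrix.vecMul p (B * B) k))
    + ∑ i, ∑ j, Fpp F i j z p * Matrix.vecMul p B i * Matrix.vecMul p B j := by
  have hL : ∀ (L : ℝ × (Fin N → ℝ) →L[ℝ] ℝ) (v : Fin N → ℝ),
      L (0, v) = ∑ j, L (0, Pi.single j 1) * v j := by
    intro L v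
    have : L (0, v) = (L.comp (ContinuousLinearMap.inr ℝ ℝ (Fin N → ℝ))) v := by simp
    rw [this, pi_eq_sum_univ' v, map_sum]
    refine Finset.sum_congr rfl fun j _ => ?_
    rw [map_smul, ← pi_eq_sum_univ' v, smul_eq_mul, mul_comm]
    simp
  have hLL : ∀ v : Fin N → ℝ, fderiv ℝ (fderiv ℝ F) (z, p) (0, v) (0, v)
      = ∑ i, ∑ j, Fpp F i j z p * v i * v j := by
    intro v
    have hF' : ContDiff ℝ 2 (fderiv ℝ F) := hF.fderiv_right (by norm_num)
    have hpp : ∀ j (w : ℝ × (Fin N → ℝ)), fderiv ℝ (fderiv ℝ F) (z, p) w (0, Pi.single j 1)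
        = fderiv ℝ (fun q => fderiv ℝ F q ((0 : ℝ), Pi.single j 1)) (z, p) w := by
      intro j w
      rw [fderiv_clm_apply ((hF'.differentiable (by norm_num)) _) (by fun_prop)]
      simp
    rw [hL]
    rw [Finset.sum_comm]
    refine Finset.sum_congr rfl fun j _ => ?_
    rw [hpp, hL, Finset.sum_mul]
    rfl
  have e0 : qq p B C 0 = p := by simp [qq, MM_zero]
  have e1 : qq1 p B C 0 = - Matrix.vecMul p B := by simp [qq1, MM_zero, Matrix.vecMul_neg]
  have e2 : qq2 p B C 0 = fun k => -2 * ((1/2) * Matrix.vecMul p C k - Matrix.vecMul p (B * B) k) := by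
    ext k
    simp [qq2, MM_zero, Matrix.vecMul_add, Matrix.vecMul_neg]
    ring
  have e3 : dd1 B C 0 = B.trace := by simp [dd1, MM_zero]
  have e4 : dd2 B C 0 = C.trace + B.trace ^ 2 - (B * B).trace := by
    simp [dd2, e3, MM_zero]
    ring
  rw [gg2, e0, e1, e2, e3, e4, MM_zero, hLL, hL, hL]
  simp only [Fp, Pi.neg_apply, mul_neg, neg_mul, neg_neg, Finset.sum_neg_distrib, Matrix.det_one,
    mul_one, mul_left_comm _ (2:ℝ) _, ← Finset.mul_sum]
  ring

end

section
variable {T : Type*} [TopologicalSpace T] {N : ℕ} {F : ℝ × (Fin N → ℝ) → ℝ}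
  (hF : ContDiff ℝ 3 F) {z : T → ℝ} (hz : Continuous z) {p : T → Fin N → ℝ} (hp : Continuous p)
  {B C : T → Matrix (Fin N) (Fin N) ℝ} (hB : Continuous B) (hC : Continuous C)
  {t : T → ℝ} (ht : Continuous t) 

include hB hC ht in
lemma cont_MM : Continuous fun x => MM (B x) (C x) (t x) := by
  unfold MM; fun_prop

include hF hz hp hB hC ht in
lemma cont_all (hd : ∀ x, (MM (B x) (C x) (t x)).det ≠ 0) :
    Continuous (fun x => gg F (z x) (p x) (B x) (C x) (t x)) ∧
    Continuous (fun x => gg1 F (z x) (p x) (B x) (C x) (t x)) ∧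
    Continuous (fun x => gg2 F (z x) (p x) (B x) (C x) (t x)) := by
  have hM := cont_MM hB hC ht
  have hS : Continuous fun x => (MM (B x) (C x) (t x))⁻¹ := by
    refine continuous_iff_continuousAt.2 fun x => ?_
    refine ContinuousAt.comp (g := fun A : Matrix (Fin N) (Fin N) ℝ => A⁻¹)
      (continuousAt_matrix_inv _ ?_) hM.continuousAt
    simpa using continuousAt_inv₀ (hd x)
  have hW : Continuous fun x => B x + t x • C x := by fun_prop
  have hdet : Continuous fun x => (MM (B x) (C x) (t x)).det := hM.matrix_det
  have hq : Continuous fun x => qq (p x) (B x) (C x) (t x) := hp.matrix_vecMul hS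
  have hq1 : Continuous fun x => qq1 (p x) (B x) (C x) (t x) := by
    refine hp.matrix_vecMul ?_
    fun_prop
  have hq2 : Continuous fun x => qq2 (p x) (B x) (C x) (t x) := by
    refine hp.matrix_vecMul ?_
    fun_prop
  have hd1 : Continuous fun x => dd1 (B x) (C x) (t x) := by
    refine hdet.mul (Continuous.matrix_trace ?_)
    fun_prop
  have hd2 : Continuous fun x => dd2 (B x) (C x) (t x) := by
    refine (hd1.mul (Continuous.matrix_trace ?_)).add (hdet.mul (Continuous.matrix_trace ?_))
    · fun_prop
    · fun_prop
  have hF0 := hF.continuous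
  have hF1 : Continuous (fderiv ℝ F) := hF.continuous_fderiv (by norm_num)
  have hF' : ContDiff ℝ 2 (fderiv ℝ F) := hF.fderiv_right (by norm_num)
  have hF2 : Continuous (fderiv ℝ (fderiv ℝ F)) := hF'.continuous_fderiv (by norm_num)
  unfold gg gg1 gg2
  refine ⟨?_, ?_, ?_⟩ <;> fun_prop

end

lemma hasDerivAt_param {N : ℕ} {Ω : Set (Fin N → ℝ)} (hΩo : IsOpen Ω)
    {K : Set (Fin N → ℝ)} (hK : IsCompact K) (hΩK : Ω ⊆ K) {τ : ℝ}
    {g g' : ℝ → (Fin N → ℝ) → ℝ}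
    (hg : ContinuousOn (fun y : ℝ × (Fin N → ℝ) => g y.1 y.2) (Set.Icc (-τ) τ ×ˢ K))
    (hg' : ContinuousOn (fun y : ℝ × (Fin N → ℝ) => g' y.1 y.2) (Set.Icc (-τ) τ ×ˢ K))
    (hd : ∀ t ∈ Set.Ioo (-τ) τ, ∀ x ∈ K, HasDerivAt (fun s => g s x) (g' t x) t)
    {t : ℝ} (ht : |t| < τ) :
    HasDerivAt (fun s => ∫ x in Ω, g s x) (∫ x in Ω, g' t x) t := by
  have htI : t ∈ Set.Ioo (-τ) τ := abs_lt.1 ht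
  have hnhds : Set.Ioo (-τ) τ ∈ 𝓝 t := isOpen_Ioo.mem_nhds htI
  have hfin : volume Ω < ⊤ := lt_of_le_of_lt (measure_mono hΩK) hK.measure_lt_top
  have hsec : ∀ h : ℝ → (Fin N → ℝ) → ℝ,
      ContinuousOn (fun y : ℝ × (Fin N → ℝ) => h y.1 y.2) (Set.Icc (-τ) τ ×ˢ K) →
      ∀ s ∈ Set.Ioo (-τ) τ, ContinuousOn (h s) K := by
    intro h hh s hs
    exact hh.comp (f := fun x => (s, x)) (by fun_prop) fun x hx => ⟨⟨hs.1.le, hs.2.le⟩, hx⟩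
  obtain ⟨c, hc⟩ := (isCompact_Icc.prod hK).exists_bound_of_continuousOn hg'
  refine (hasDerivAt_integral_of_dominated_loc_of_deriv_le (μ := volume.restrict Ω)
    (bound := fun _ => c) hnhds ?_ ?_ ?_ ?_ ?_ ?_).2
  · filter_upwards [hnhds] with s hs
    exact ((hsec g hg s hs).mono hΩK).aestronglyMeasurable hΩo.measurableSet
  · exact ((hsec g hg t htI).integrableOn_compact hK).mono_set hΩK
  · exact ((hsec g' hg' t htI).mono hΩK).aestronglyMeasurable hΩo.measurableSet
  · filter_upwards [ae_restrict_mem hΩo.measurableSet] with x hx s hs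
    exact hc (s, x) ⟨⟨hs.1.le, hs.2.le⟩, hΩK hx⟩
  · exact integrableOn_const hfin.ne
  · filter_upwards [ae_restrict_mem hΩo.measurableSet] with x hx s hs
    exact hd s hs x (hΩK hx)

lemma continuous_pdv {N : ℕ} {f : (Fin N → ℝ) → ℝ} (hf : ContDiff ℝ 1 f) (j : Fin N) :
    Continuous (pdv f j) :=
  (hf.continuous_fderiv (by norm_num)).clm_apply continuous_const

lemma contDiff_advf {N : ℕ} {η : (Fin N → ℝ) → (Fin N → ℝ)} (hη : ContDiff ℝ 3 η) (i : Fin N) :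
    ContDiff ℝ 2 (fun z => advf η z i) := by
  have h := contDiff_pi.1 hη
  unfold advf
  refine ContDiff.sum fun j _ => ((h j).of_le (by norm_num)).mul ?_
  exact ((h i).fderiv_right (m := 2) (by norm_num)).clm_apply contDiff_const

end Helpers

/-- Second inner variation via change of variables: with `Z := (η·∇)η`,
`M_t(x) := I + t∇η + (t²/2)∇Z` and `𝔄(t) := ∫_Ω F(u, ∇u·M_t⁻¹) det M_t`, `𝔄` is twice
differentiable at `t = 0` and
`𝔄''(0) = ∫_Ω {F X − 2(∇_pF, ∇u·∇η) div η − 2(∇_pF, Y) + F_{p_ip_j}(∇u·∇η)_i(∇u·∇η)_j}`,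
where `X := div Z + (div η)² − trace((∇η)²)` and `Y := (1/2)∇u·∇Z − ∇u·(∇η)²`. -/
theorem second_inner_variation_change_of_variables
    (N : ℕ) (Ω : Set (Fin N → ℝ)) (hΩo : IsOpen Ω) (hΩb : Bornology.IsBounded Ω)
    (F : ℝ × (Fin N → ℝ) → ℝ) (hF : ContDiff ℝ 3 F)
    (u : (Fin N → ℝ) → ℝ) (hu : ContDiff ℝ 3 u) (hub : BddUpTo 3 u)
    (η : (Fin N → ℝ) → (Fin N → ℝ))
    (hη : ContDiff ℝ 3 η) (hηb : BddUpTo 3 η) :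
    ∃ τ > (0 : ℝ),
      (∀ t : ℝ, |t| < τ → ∀ x ∈ Ω, IsUnit (defMat η (advf η) t x)) ∧
      ∃ A' : ℝ → ℝ,
        (∀ t : ℝ, |t| < τ →
          HasDerivAt
            (fun s : ℝ => ∫ x in Ω,
              F (u x, fun j => ∑ i, pdv u i x * (defMat η (advf η) s x)⁻¹ i j)
                * (defMat η (advf η) s x).det)
            (A' t) t) ∧
        HasDerivAt A'
          (∫ x in Ω,
            (F (u x, grad u x)
                * ((∑ i, pdv (fun z => advf η z i) i x)
                    + (∑ i, pdv (fun z => η z i) i x) ^ 2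
                    - ∑ i, ∑ j, pdv (fun z => η z i) j x * pdv (fun z => η z j) i x)
              - 2 * (∑ j, Fp F j (u x) (grad u x)
                    * (∑ i, pdv u i x * pdv (fun z => η z i) j x))
                  * (∑ i, pdv (fun z => η z i) i x)
              - 2 * (∑ k, Fp F k (u x) (grad u x)
                    * ((1 / 2) * (∑ i, pdv u i x * pdv (fun z => advf η z i) k x)
                        - ∑ i, ∑ j, pdv u i x * pdv (fun z => η z i) j x
                            * pdv (fun z => η z j) k x))
              + ∑ i, ∑ j, Fpp F i j (u x) (grad u x)
                  * (∑ l, pdv u l x * pdv (fun z => η z l) i x)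
                  * (∑ l, pdv u l x * pdv (fun z => η z l) j x))) 0 := by
  classical
  have hηi := contDiff_pi.1 hη
  set B : (Fin N → ℝ) → Matrix (Fin N) (Fin N) ℝ :=
    fun x => Matrix.of fun i j => pdv (fun z => η z i) j x with hBdef
  set C : (Fin N → ℝ) → Matrix (Fin N) (Fin N) ℝ :=
    fun x => Matrix.of fun i j => pdv (fun z => advf η z i) j x with hCdef
  have hB : Continuous B := continuous_matrix fun i j =>
    continuous_pdv ((hηi i).of_le (by norm_num)) j
  have hC : Continuous C := continuous_matrix fun i j =>
    continuous_pdv ((contDiff_advf hη i).of_le (by norm_num)) j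
  have hp : Continuous (grad u) := continuous_pi fun i =>
    continuous_pdv (hu.of_le (by norm_num)) i
  have hz : Continuous u := hu.continuous
  have hM : ∀ t x, defMat η (advf η) t x = MM (B x) (C x) t := by
    intro t x
    ext i j
    simp [defMat, MM, hBdef, hCdef, Matrix.one_apply]
  have hK : IsCompact (closure Ω) := hΩb.isCompact_closure
  have hcM : Continuous fun y : ℝ × (Fin N → ℝ) => (MM (B y.2) (C y.2) y.1).det :=
    (cont_MM (hB.comp continuous_snd) (hC.comp continuous_snd) continuous_fst).matrix_det
  have hopen : IsOpen {y : ℝ × (Fin N → ℝ) | (MM (B y.2) (C y.2) y.1).det ≠ 0} :=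
    isOpen_ne_fun hcM continuous_const
  obtain ⟨U, V, hU, hV, h0U, hKV, hUV⟩ := generalized_tube_lemma
    (isCompact_singleton (x := (0:ℝ))) hK hopen (by
      rintro ⟨s, x⟩ ⟨hs, hx⟩
      have hs' : s = 0 := hs
      subst hs'
      simp [MM_zero])
  obtain ⟨ε, hε, hεU⟩ := Metric.isOpen_iff.1 hU 0 (h0U rfl)
  have hsub : Set.Icc (-(ε/2)) (ε/2) ×ˢ closure Ω ⊆
      {y : ℝ × (Fin N → ℝ) | (MM (B y.2) (C y.2) y.1).det ≠ 0} := by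
    rintro ⟨s, x⟩ ⟨hs, hx⟩
    refine hUV ⟨hεU ?_, hKV hx⟩
    rw [Metric.mem_ball, Real.dist_eq, sub_zero]
    have := abs_le.2 hs
    dsimp at this
    linarith
  have hcont := cont_all (T := (Set.Icc (-(ε/2)) (ε/2) ×ˢ closure Ω : Set (ℝ × (Fin N → ℝ)))) hF
    (z := fun y => u y.1.2) (hz.comp (continuous_snd.comp continuous_subtype_val))
    (p := fun y => grad u y.1.2) (hp.comp (continuous_snd.comp continuous_subtype_val))
    (B := fun y => B y.1.2) (C := fun y => C y.1.2)
    (hB.comp (continuous_snd.comp continuous_subtype_val))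
    (hC.comp (continuous_snd.comp continuous_subtype_val))
    (t := fun y => y.1.1) (continuous_fst.comp continuous_subtype_val) (fun y => hsub y.2)
  obtain ⟨c0, c1, c2⟩ := hcont
  have k0 : ContinuousOn (fun y : ℝ × (Fin N → ℝ) => gg F (u y.2) (grad u y.2) (B y.2) (C y.2) y.1)
    (Set.Icc (-(ε/2)) (ε/2) ×ˢ closure Ω) := continuousOn_iff_continuous_domRestrict.2 c0
  have k1 : ContinuousOn (fun y : ℝ × (Fin N → ℝ) => gg1 F (u y.2) (grad u y.2) (B y.2) (C y.2) y.1)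
    (Set.Icc (-(ε/2)) (ε/2) ×ˢ closure Ω) := continuousOn_iff_continuous_domRestrict.2 c1
  have k2 : ContinuousOn (fun y : ℝ × (Fin N → ℝ) => gg2 F (u y.2) (grad u y.2) (B y.2) (C y.2) y.1)
    (Set.Icc (-(ε/2)) (ε/2) ×ˢ closure Ω) := continuousOn_iff_continuous_domRestrict.2 c2
  have hdet : ∀ t ∈ Set.Ioo (-(ε/2)) (ε/2), ∀ x ∈ closure Ω, (MM (B x) (C x) t).det ≠ 0 :=
    fun t ht x hx => hsub (a := (t, x)) ⟨⟨ht.1.le, ht.2.le⟩, hx⟩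
  refine ⟨ε / 2, by positivity, ?_,
    fun t => ∫ x in Ω, gg1 F (u x) (grad u x) (B x) (C x) t, ?_, ?_⟩
  · intro t ht x hx
    rw [hM, Matrix.isUnit_iff_isUnit_det, isUnit_iff_ne_zero]
    exact hdet t (abs_lt.1 ht) x (subset_closure hx)
  · intro t ht
    simp only [hM]
    exact hasDerivAt_param hΩo hK subset_closure
      (g := fun t x => gg F (u x) (grad u x) (B x) (C x) t)
      (g' := fun t x => gg1 F (u x) (grad u x) (B x) (C x) t) k0 k1
      (fun s hs x hx => hasDerivAt_gg F hF _ _ _ _ _ (hdet s hs x hx)) ht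
  · have h := hasDerivAt_param hΩo hK subset_closure
      (g := fun t x => gg1 F (u x) (grad u x) (B x) (C x) t)
      (g' := fun t x => gg2 F (u x) (grad u x) (B x) (C x) t) k1 k2
      (fun s hs x hx => hasDerivAt_gg1 F hF _ _ _ _ _ (hdet s hs x hx)) (t := 0)
      (by simpa using hε)
    refine h.congr_deriv (integral_congr_ae (Eventually.of_forall fun x => ?_))
    have hBB : ∀ k, Matrix.vecMul (grad u x) (B x * B x) k =
        ∑ i, ∑ j, pdv u i x * pdv (fun z => η z i) j x * pdv (fun z => η z j) k x := by
      intro k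
      simp only [Matrix.vecMul, dotProduct, Matrix.mul_apply, hBdef, Matrix.of_apply, grad,
        Finset.mul_sum, mul_assoc]
    have hv : ∀ k, Matrix.vecMul (grad u x) (B x) k =
        ∑ i, pdv u i x * pdv (fun z => η z i) k x := fun k => rfl
    have hvC : ∀ k, Matrix.vecMul (grad u x) (C x) k =
        ∑ i, pdv u i x * pdv (fun z => advf η z i) k x := fun k => rfl
    have htB : (B x).trace = ∑ i, pdv (fun z => η z i) i x := rfl
    have htC : (C x).trace = ∑ i, pdv (fun z => advf η z i) i x := rfl
    have htBB : (B x * B x).trace =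
        ∑ i, ∑ j, pdv (fun z => η z i) j x * pdv (fun z => η z j) i x := by
      simp only [Matrix.trace, Matrix.diag, Matrix.mul_apply, hBdef, Matrix.of_apply]
    simp only [gg2_zero F hF, hBB, hv, hvC, htB, htC, htBB]

end PaperAC
end

section
/- Let Ω ⊂ ℝ^N be open and bounded, let (ε_k) be positive with ε_k → 0, and let u_k : ℝ^N → ℝ be of class C¹. Let λ be a finite Borel measure on Ω and ρ : Ω → ℝ^N Borel with |ρ| = 1 λ-a.e. Assume: (i) for every bounded continuous φ : Ω → ℝ and all i, j, ∫_Ω ε_k ∂u_k/∂x_i ∂u_k/∂x_j φ dx → ∫_Ω ρ_i ρ_j φ dλ; and (ii) ∫_Ω | ε_k|∇u_k|² − (1 − u_k²)²/ε_k | dx → 0. Let η : ℝ^N → ℝ^N be bounded C³ with bounded derivatives and set Z := (η·∇)η. Then ∫_Ω { ( ε_k|∇u_k|²/2 + (1 − u_k²)²/(2ε_k) ) ( div Z + (div η)² − trace((∇η)²) ) − 2 ε_k (∇u_k, ∇u_k·∇η) div η − 2 ε_k (∇u_k, (1/2)∇u_k·∇Z − ∇u_k·(∇η)²) + ε_k |∇u_k·∇η|²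 } dx → ∫_Ω { div Z + (div η)² − trace((∇η)²) − 2(ρ, ρ·∇η) div η − 2(ρ, (1/2)ρ·∇Z − ρ·(∇η)²) + |ρ·∇η|² } dλ as k → ∞, where for a vector v the covector v·∇η has j-th component Σ_i v_i ∂η^i/∂x_j, v·∇Z has j-th component Σ_i v_i ∂Z^i/∂x_j, and v·(∇η)² has k-th component Σ_{i,j} v_i ∂η^i/∂x_j ∂η^j/∂x_k. -/
open Filter MeasureTheory Topology
open scoped RealInnerProductSpace

namespace PaperAC

theorem quad_alg {N : ℕ} (e S d : ℝ) (v : Fin N → ℝ) (a z : Fin N → Fin N → ℝ) :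
    (e * (∑ i, v i ^ 2)) * S - 2 * e * (∑ j, v j * (∑ i, v i * a i j)) * d
      - 2 * e * (∑ c, v c * ((1 / 2) * (∑ i, v i * z i c)
          - ∑ i, ∑ j, v i * a i j * a j c))
      + e * ∑ j, (∑ i, v i * a i j) ^ 2
    = ∑ i, ∑ j, e * v i * v j * ((if i = j then S else 0) - 2 * a i j * d
        - 2 * ((1 / 2) * z i j - ∑ l, a i l * a l j) + ∑ l, a i l * a j l) := by
  have h1 : (e * (∑ i, v i ^ 2)) * S = ∑ i, ∑ j, e * v i * v j * (if i = j then S else 0) := by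
    simp only [mul_ite, mul_zero, Finset.sum_ite_eq, Finset.mem_univ, if_true]
    rw [Finset.mul_sum, Finset.sum_mul]
    exact Finset.sum_congr rfl fun i _ => by ring
  have h2 : 2 * e * (∑ j, v j * (∑ i, v i * a i j)) * d
      = ∑ i, ∑ j, e * v i * v j * (2 * a i j * d) := by
    rw [Finset.sum_comm, Finset.mul_sum, Finset.sum_mul]
    refine Finset.sum_congr rfl fun i _ => ?_
    rw [Finset.mul_sum, Finset.mul_sum, Finset.sum_mul]
    exact Finset.sum_congr rfl fun i _ => by ring
  have h3 : 2 * e * (∑ c, v c * ((1 / 2) * (∑ i, v i * z i c)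
          - ∑ i, ∑ j, v i * a i j * a j c))
      = ∑ i, ∑ j, e * v i * v j * (2 * ((1 / 2) * z i j - ∑ l, a i l * a l j)) := by
    rw [Finset.sum_comm, Finset.mul_sum]
    refine Finset.sum_congr rfl fun c _ => ?_
    rw [Finset.mul_sum, ← Finset.sum_sub_distrib, Finset.mul_sum, Finset.mul_sum]
    refine Finset.sum_congr rfl fun i _ => ?_
    have : ∑ j, v i * a i j * a j c = v i * ∑ j, a i j * a j c := by
      rw [Finset.mul_sum]
      exact Finset.sum_congr rfl fun i _ => by ring
    rw [this]
    ring
  have h4 : e * ∑ j, (∑ i, v i * a i j) ^ 2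
      = ∑ i, ∑ j, e * v i * v j * ∑ l, a i l * a j l := by
    simp only [Finset.mul_sum, sq, Finset.sum_mul]
    rw [Finset.sum_comm]
    conv_rhs => rw [Finset.sum_comm]
    refine Finset.sum_congr rfl fun i _ => ?_
    rw [Finset.sum_comm]
    refine Finset.sum_congr rfl fun j _ => ?_
    exact Finset.sum_congr rfl fun l _ => by ring
  rw [h1, h2, h3, h4]
  simp only [← Finset.sum_sub_distrib, ← Finset.sum_add_distrib]
  exact Finset.sum_congr rfl fun i _ => Finset.sum_congr rfl fun j _ => by ring

theorem pdv_contDiff {N : ℕ} {f : (Fin N → ℝ) → ℝ} {n m : ℕ} (hf : ContDiff ℝ n f)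
    (h : m + 1 ≤ n) (j : Fin N) : ContDiff ℝ m (pdv f j) := by
  unfold pdv
  have h' : ((m : ℕ∞) : WithTop ℕ∞) + 1 ≤ ((n : ℕ∞) : WithTop ℕ∞) := by exact_mod_cast h
  exact (hf.fderiv_right h').clm_apply contDiff_const

theorem bdd_of_cont {N : ℕ} {Ω : Set (Fin N → ℝ)} (hΩb : Bornology.IsBounded Ω)
    {f : (Fin N → ℝ) → ℝ} (hf : Continuous f) : ∃ C : ℝ, ∀ x ∈ Ω, |f x| ≤ C := by
  obtain ⟨C, hC⟩ := hΩb.isCompact_closure.exists_bound_of_continuousOn hf.continuousOn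
  exact ⟨C, fun x hx => hC x (subset_closure hx)⟩

theorem int_of_cont {N : ℕ} {Ω : Set (Fin N → ℝ)} (hΩb : Bornology.IsBounded Ω)
    {f : (Fin N → ℝ) → ℝ} (hf : Continuous f) : IntegrableOn f Ω :=
  (hf.continuousOn.integrableOn_compact hΩb.isCompact_closure).mono_set subset_closure

/-- Convergence of the second inner variation of the Allen–Cahn energy
with velocity `η` and acceleration `Z := (η·∇)η`: under the quadratic-convergence
hypothesis for `ε_k ∇u_k ⊗ ∇u_k` and vanishing of the discrepancy,
`δ²E_{ε_k}(u_k, η, Z)` converges to the corresponding expression with `ε_k ∇u_k ⊗ ∇u_k dx`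
replaced by `ρ ⊗ ρ dλ`. -/
theorem second_inner_variation_allen_cahn_limit
    (N : ℕ) (Ω : Set (Fin N → ℝ)) (hΩo : IsOpen Ω) (hΩb : Bornology.IsBounded Ω)
    (ε : ℕ → ℝ) (hε : ∀ k, 0 < ε k) (hε0 : Tendsto ε atTop (𝓝 0))
    (u : ℕ → (Fin N → ℝ) → ℝ) (hu : ∀ k, ContDiff ℝ 1 (u k))
    (lam0 : Measure (Fin N → ℝ)) [IsFiniteMeasure lam0]
    (ρ : (Fin N → ℝ) → (Fin N → ℝ)) (hρm : Measurable ρ)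
    (hρ1 : ∀ᵐ x ∂(lam0.restrict Ω), Real.sqrt (∑ i, ρ x i ^ 2) = 1)
    (hquad : ∀ φ : (Fin N → ℝ) → ℝ, ContinuousOn φ Ω → (∃ C : ℝ, ∀ x ∈ Ω, |φ x| ≤ C) →
      ∀ i j : Fin N,
        Tendsto (fun k => ∫ x in Ω, ε k * pdv (u k) i x * pdv (u k) j x * φ x) atTop
          (𝓝 (∫ x in Ω, ρ x i * ρ x j * φ x ∂lam0)))
    (hdiscr : Tendsto
      (fun k => ∫ x in Ω,
        |ε k * (∑ i, pdv (u k) i x ^ 2) - (1 - u k x ^ 2) ^ 2 / ε k|) atTop (𝓝 0))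
    (η : (Fin N → ℝ) → (Fin N → ℝ))
    (hη : ContDiff ℝ 3 η) (hηb : BddUpTo 3 η) :
    Tendsto
      (fun k => ∫ x in Ω,
        ((ε k * (∑ i, pdv (u k) i x ^ 2) / 2 + (1 - u k x ^ 2) ^ 2 / (2 * ε k))
            * ((∑ i, pdv (fun z => advf η z i) i x)
                + (∑ i, pdv (fun z => η z i) i x) ^ 2
                - ∑ i, ∑ j, pdv (fun z => η z i) j x * pdv (fun z => η z j) i x)
          - 2 * ε k * (∑ j, pdv (u k) j x
                * (∑ i, pdv (u k) i x * pdv (fun z => η z i) j x))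
              * (∑ i, pdv (fun z => η z i) i x)
          - 2 * ε k * (∑ c, pdv (u k) c x
                * ((1 / 2) * (∑ i, pdv (u k) i x * pdv (fun z => advf η z i) c x)
                    - ∑ i, ∑ j, pdv (u k) i x * pdv (fun z => η z i) j x
                        * pdv (fun z => η z j) c x))
          + ε k * ∑ j, (∑ i, pdv (u k) i x * pdv (fun z => η z i) j x) ^ 2))
      atTop
      (𝓝 (∫ x in Ω,
        (((∑ i, pdv (fun z => advf η z i) i x)
            + (∑ i, pdv (fun z => η z i) i x) ^ 2
            - ∑ i, ∑ j, pdv (fun z => η z i) j x * pdv (fun z => η z j) i x)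
          - 2 * (∑ j, ρ x j * (∑ i, ρ x i * pdv (fun z => η z i) j x))
              * (∑ i, pdv (fun z => η z i) i x)
          - 2 * (∑ c, ρ x c
                * ((1 / 2) * (∑ i, ρ x i * pdv (fun z => advf η z i) c x)
                    - ∑ i, ∑ j, ρ x i * pdv (fun z => η z i) j x
                        * pdv (fun z => η z j) c x))
          + ∑ j, (∑ i, ρ x i * pdv (fun z => η z i) j x) ^ 2) ∂lam0)) := by
  have hηi : ∀ i, ContDiff ℝ (3 : ℕ) (fun z => η z i) := fun i => by
    exact_mod_cast (contDiff_pi.1 hη) i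
  have ha : ∀ i j, ContDiff ℝ (2 : ℕ) (fun x => pdv (fun z => η z i) j x) :=
    fun i j => pdv_contDiff (hηi i) le_rfl j
  have hadv : ∀ i, ContDiff ℝ (2 : ℕ) (fun z => advf η z i) := fun i => by
    unfold advf
    exact ContDiff.sum fun j _ => ((hηi j).of_le (by norm_num)).mul (ha i j)
  have hz : ∀ i j, Continuous (fun x => pdv (fun z => advf η z i) j x) :=
    fun i j => (pdv_contDiff (m := 1) (hadv i) le_rfl j).continuous
  have hac : ∀ i j, Continuous (fun x => pdv (fun z => η z i) j x) :=
    fun i j => (ha i j).continuous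
  have huc : ∀ k, Continuous (u k) := fun k => (hu k).continuous
  have hpu : ∀ k i, Continuous (pdv (u k) i) := fun k i =>
    (pdv_contDiff (n := 1) (m := 0) (by exact_mod_cast hu k) le_rfl i).continuous
  clear hηi ha hadv hu hηb hη
  generalize hzd : (fun i j x => pdv (fun z => advf η z i) j x) = z at *
  generalize had : (fun i j x => pdv (fun z => η z i) j x) = a at *
  have hzd' : ∀ i j x, pdv (fun z => advf η z i) j x = z i j x := fun i j x => by rw [← hzd]
  have had' : ∀ i j x, pdv (fun z => η z i) j x = a i j x := fun i j x => by rw [← had]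
  simp only [hzd', had'] at hz hac ⊢
  clear hzd' had' hzd had
  set S : (Fin N → ℝ) → ℝ := fun x => (∑ i, z i i x) + (∑ i, a i i x) ^ 2
    - ∑ i, ∑ j, a i j x * a j i x with hS
  have hSc : Continuous S := by fun_prop
  set A : Fin N → Fin N → (Fin N → ℝ) → ℝ := fun i j x =>
    (if i = j then S x else 0) - 2 * a i j x * (∑ i, a i i x)
        - 2 * ((1 / 2) * z i j x - ∑ l, a i l x * a l j x) + ∑ l, a i l x * a j l x with hA
  have hAc : ∀ i j, Continuous (A i j) := fun i j => by
    by_cases h : i = j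
    · simp only [hA, h, if_true]; fun_prop
    · simp only [hA, h, if_false]; fun_prop
  set D : ℕ → (Fin N → ℝ) → ℝ := fun k x =>
    ε k * (∑ i, pdv (u k) i x ^ 2) - (1 - u k x ^ 2) ^ 2 / ε k with hD
  have hDc : ∀ k, Continuous (D k) := fun k => by
    have := huc k
    have := hpu k
    simp only [hD]
    fun_prop
  have hTc : ∀ k i j, Continuous (fun x => ε k * pdv (u k) i x * pdv (u k) j x * A i j x) :=
    fun k i j => by
      have := hpu k
      have := hAc i j
      fun_prop
  -- main part
  have hmain : Tendsto (fun k => ∑ i, ∑ j,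
      ∫ x in Ω, ε k * pdv (u k) i x * pdv (u k) j x * A i j x) atTop
      (𝓝 (∑ i, ∑ j, ∫ x in Ω, ρ x i * ρ x j * A i j x ∂lam0)) :=
    tendsto_finsetSum _ fun i _ => tendsto_finsetSum _ fun j _ =>
      hquad (A i j) (hAc i j).continuousOn (bdd_of_cont hΩb (hAc i j)) i j
  have herr : Tendsto (fun k => ∫ x in Ω, D k x * S x) atTop (𝓝 0) := by
    obtain ⟨C, hC⟩ := bdd_of_cont hΩb hSc
    have h0 : Tendsto (fun k => (∫ x in Ω, |D k x|) * C) atTop (𝓝 0) := by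
      simpa using hdiscr.mul_const C
    refine squeeze_zero_norm (fun k => ?_) h0
    rw [← integral_mul_const]
    refine norm_integral_le_of_norm_le
      (int_of_cont hΩb ((hDc k).abs.mul continuous_const)) ?_
    filter_upwards [ae_restrict_mem hΩo.measurableSet] with x hx
    rw [norm_mul]
    exact mul_le_mul_of_nonneg_left (hC x hx) (abs_nonneg _)
  have hρle : ∀ i, ∀ᵐ x ∂(lam0.restrict Ω), |ρ x i| ≤ 1 := fun i => by
    filter_upwards [hρ1] with x hx
    have h1 : ∑ i, ρ x i ^ 2 = 1 := by rwa [Real.sqrt_eq_one] at hx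
    have h2 : ρ x i ^ 2 ≤ ∑ i, ρ x i ^ 2 :=
      Finset.single_le_sum (f := fun i => ρ x i ^ 2) (fun i _ => sq_nonneg _) (Finset.mem_univ i)
    rw [← sq_le_one_iff_abs_le_one]
    linarith
  have hρi : ∀ i, Measurable fun x => ρ x i := fun i => (measurable_pi_apply i).comp hρm
  have hRint : ∀ i j, Integrable (fun x => ρ x i * ρ x j * A i j x) (lam0.restrict Ω) := by
    intro i j
    obtain ⟨C, hC⟩ := bdd_of_cont hΩb (hAc i j)
    refine Integrable.of_bound
      (((hρi i).mul (hρi j)).mul (hAc i j).measurable).aestronglyMeasurable C ?_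
    filter_upwards [ae_restrict_mem hΩo.measurableSet, hρle i, hρle j] with x hx hi hj
    rw [Real.norm_eq_abs, abs_mul, abs_mul]
    have := hC x hx
    have h3 : |ρ x i| * |ρ x j| ≤ 1 := mul_le_one₀ hi (abs_nonneg _) hj
    calc |ρ x i| * |ρ x j| * |A i j x| ≤ 1 * |A i j x| :=
          mul_le_mul_of_nonneg_right h3 (abs_nonneg _)
      _ ≤ C := by linarith
  have hfin := hmain.sub (herr.mul_const (1 / 2))
  rw [zero_mul, sub_zero] at hfin
  convert hfin using 1
  · funext k
    have e1 : ∑ i, ∑ j, ∫ x in Ω, ε k * pdv (u k) i x * pdv (u k) j x * A i j x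
        = ∫ x in Ω, ∑ i, ∑ j, ε k * pdv (u k) i x * pdv (u k) j x * A i j x := by
      rw [integral_finsetSum _ fun i _ => integrable_finsetSum _ fun j _ =>
        int_of_cont hΩb (hTc k i j)]
      exact Finset.sum_congr rfl fun i _ =>
        (integral_finsetSum _ fun j _ => int_of_cont hΩb (hTc k i j)).symm
    rw [e1, ← integral_mul_const, ← integral_sub]
    · refine integral_congr_ae (Eventually.of_forall fun x => ?_)
      have hq := quad_alg (ε k) (S x) (∑ i, a i i x) (fun i => pdv (u k) i x)
        (fun i j => a i j x) (fun i j => z i j x)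
      simp only [hA]
      beta_reduce at hq
      rw [← hq]
      have he := (hε k).ne'
      have h5 : (1 - u k x ^ 2) ^ 2 / (2 * ε k) = (1 - u k x ^ 2) ^ 2 / ε k / 2 := by
        field_simp
      simp only [hD, h5, hS]
      ring
    · exact integrable_finsetSum _ fun i _ => integrable_finsetSum _ fun j _ =>
        int_of_cont hΩb (hTc k i j)
    · exact int_of_cont hΩb (((hDc k).mul hSc).mul continuous_const)
  · congr 1
    have e1 : ∑ i, ∑ j, ∫ x in Ω, ρ x i * ρ x j * A i j x ∂lam0
        = ∫ x in Ω, ∑ i, ∑ j, ρ x i * ρ x j * A i j x ∂lam0 := by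
      rw [integral_finsetSum _ fun i _ => integrable_finsetSum _ fun j _ => hRint i j]
      exact Finset.sum_congr rfl fun i _ =>
        (integral_finsetSum _ fun j _ => hRint i j).symm
    rw [e1]
    refine integral_congr_ae ?_
    filter_upwards [hρ1] with x hx
    have h1 : ∑ i, ρ x i ^ 2 = 1 := by rwa [Real.sqrt_eq_one] at hx
    have hq := quad_alg 1 (S x) (∑ i, a i i x) (fun i => ρ x i)
        (fun i j => a i j x) (fun i j => z i j x)
    simp only [hA]
    simp only [h1, one_mul, mul_one] at hq ⊢
    rw [← hq]


end PaperAC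
end
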